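/- arXiv:1801.05121 — 2 statements merged into one kernel-verified Lean document; each statement's English description precedes it below -/
import Mathlib

section
/- For every α > 0 and every κ_1, κ_2 with β < κ_1 < κ_2, there exists a function V : Ω → [1, ∞) of class C²(Ω), satisfying V_1(0, x_2) = V_2(0, x_2) for all x_2 ≥ 0 and V(x) → ∞ as |x| → ∞, such that G_Y V(x) ≤ −α·c·V(x) + α·d for all x ∈ Ω, where c = 1 − (12/(κ_2 − κ_1)²)·log((κ_2 − β)/(κ_1 − β)) − (1/(β(κ_1 − β)))·(1 + (κ_1/(κ_1 − β))·(4(κ_1 − β)/(κ_2 − κ_1))) − α·((4/(κ_2 − κ_1))·log((κ_2 − β)/(κ_1 − β)) + 1/β)² and d = (((κ_2 − β)/(κ_1 − β))·(κ_2/κ_1))^α · e^{α(κ_2 − κ_1)/β}. -/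
/-!
The Lyapunov function is `V = exp (α F)` with
`F = s g(-x₁) + P(x₂) + q(log x₂ + (x₁ + β) / x₂)`.
The argument of `q` is constant along the fluid trajectories `x₁' = -x₁ + x₂ - β`, `x₂' = -x₂`, so
`q` does not contribute to the first-order part of `G_Y F`; it is chosen such that its oblique
derivative on `x₁ = 0` cancels the one of `P`. Since `g` and `P` grow linearly and logarithmically,
the fluid drift of `F` is nonpositive everywhere and at most `-1` outside the box
`[-κ₂, 0] × [0, κ₂]`. With a bound on `F_11 + α F_1²` this gives `G_Y V ≤ -α c V` outside the box,
and inside it the missing term `α V` is paid by the bound of `V` on the box, which is at most `d`.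
-/

open Filter Set

theorem contDiff_succ_of_hasDerivAt {F f : ℝ → ℝ} {n : ℕ} (hF : ∀ x, HasDerivAt F (f x) x)
    (hf : ContDiff ℝ n f) : ContDiff ℝ (n + 1) F := by
  rw [contDiff_succ_iff_deriv, funext fun x => (hF x).deriv]
  exact ⟨fun x => (hF x).differentiableAt, by simp, hf⟩

theorem contDiff_two_of_hasDerivAt {F f f' : ℝ → ℝ} (hF : ∀ x, HasDerivAt F (f x) x)
    (hf : ∀ x, HasDerivAt f (f' x) x) (hf' : Continuous f') : ContDiff ℝ 2 F :=
  contDiff_succ_of_hasDerivAt (n := 1) hF <|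
    contDiff_succ_of_hasDerivAt (n := 0) hf (contDiff_zero.2 hf')

theorem hasDerivAt_eq_zero_of_forall_le_eq_zero {F : ℝ → ℝ} {d t : ℝ} (hF : HasDerivAt F d t)
    (h : ∀ s ≤ t, F s = 0) : d = 0 :=
  (uniqueDiffOn_Iic t t self_mem_Iic).eq_deriv _ hF.hasDerivWithinAt <|
    (hasDerivWithinAt_const t (Iic t) (0 : ℝ)).congr h (h t le_rfl)

theorem contDiff_div_id_of_forall_le_eq_zero {f : ℝ → ℝ} {a : ℝ} {n : WithTop ℕ∞} (ha : 0 < a)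
    (hf : ContDiff ℝ n f) (h : ∀ x ≤ a, f x = 0) : ContDiff ℝ n fun x => f x / x := by
  refine contDiff_iff_contDiffAt.2 fun x => ?_
  rcases lt_or_ge x a with hx | hx
  · refine (contDiffAt_const (c := (0 : ℝ))).congr_of_eventuallyEq ?_
    filter_upwards [gt_mem_nhds hx] with y hy
    rw [h y hy.le, zero_div]
  · exact hf.contDiffAt.div contDiffAt_id (ha.trans_le hx).ne'

section Antiderivative

variable {f : ℝ → ℝ} {a : ℝ}

theorem integral_eq_zero_of_forall_le_eq_zero (h : ∀ x ≤ a, f x = 0) {x : ℝ} (hx : x ≤ a) :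
    ∫ t in a..x, f t = 0 := by
  rw [intervalIntegral.integral_congr (g := fun _ => 0), intervalIntegral.integral_zero]
  intro t ht
  rw [uIcc_of_ge hx] at ht
  exact h t ht.2

theorem integral_nonneg_of_forall_le_eq_zero (h : ∀ x ≤ a, f x = 0) (hf : ∀ x, 0 ≤ f x) (x : ℝ) :
    0 ≤ ∫ t in a..x, f t := by
  rcases le_total x a with hx | hx
  · exact (integral_eq_zero_of_forall_le_eq_zero h hx).ge
  · exact intervalIntegral.integral_nonneg hx fun t _ => hf t

theorem integral_le_integral_of_forall_le_eq_zero (hc : Continuous f) (h : ∀ x ≤ a, f x = 0)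
    (hf : ∀ x, 0 ≤ f x) (b x : ℝ) : ∫ t in b..x, f t ≤ ∫ t in a..x, f t := by
  rw [← intervalIntegral.integral_add_adjacent_intervals (hc.intervalIntegrable a b)
    (hc.intervalIntegrable b x)]
  exact le_add_of_nonneg_left (integral_nonneg_of_forall_le_eq_zero h hf b)

end Antiderivative

/-! ### Cutoff functions -/

/-- A `C¹` cutoff function increasing from `0` on `(-∞, a]` to `1` on `[b, ∞)`, bundled with its
derivative `slope`. -/
structure Cutoff (a b : ℝ) where
  toFun : ℝ → ℝ
  slope : ℝ → ℝ
  hasDerivAt : ∀ x, HasDerivAt toFun (slope x) x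
  continuous_slope : Continuous slope
  slope_nonneg : ∀ x, 0 ≤ slope x
  eq_zero : ∀ x ≤ a, toFun x = 0
  eq_one : ∀ x, b ≤ x → toFun x = 1

namespace Cutoff

instance (a b : ℝ) : CoeFun (Cutoff a b) fun _ => ℝ → ℝ := ⟨toFun⟩

section CubicDensity

variable {a b : ℝ}

/-- The derivative of the cubic `3 y² - 2 y³`, `y = (x - a) / (b - a)`, cut off outside `[a, b]`:
it is the slope of the cutoff function `Cutoff.cubic`. -/
noncomputable def cubicDensity (a b x : ℝ) : ℝ := 6 / (b - a) ^ 3 * max 0 ((x - a) * (b - x))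

theorem continuous_cubicDensity : Continuous (cubicDensity a b) := by
  unfold cubicDensity
  fun_prop

theorem cubicDensity_of_le (hab : a ≤ b) {x : ℝ} (hx : x ≤ a) : cubicDensity a b x = 0 := by
  rw [cubicDensity, max_eq_left, mul_zero]
  exact mul_nonpos_of_nonpos_of_nonneg (sub_nonpos.2 hx) (sub_nonneg.2 (hx.trans hab))

theorem cubicDensity_of_ge (hab : a ≤ b) {x : ℝ} (hx : b ≤ x) : cubicDensity a b x = 0 := by
  rw [cubicDensity, max_eq_left, mul_zero]
  exact mul_nonpos_of_nonneg_of_nonpos (sub_nonneg.2 (hab.trans hx)) (sub_nonpos.2 hx)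

theorem cubicDensity_nonneg (hab : a ≤ b) (x : ℝ) : 0 ≤ cubicDensity a b x := by
  have := sub_nonneg.2 hab
  unfold cubicDensity
  positivity

theorem cubicDensity_le (hab : a < b) (x : ℝ) : cubicDensity a b x ≤ 3 / 2 / (b - a) := by
  have hba := sub_pos.2 hab
  have hmax : max 0 ((x - a) * (b - x)) ≤ (b - a) ^ 2 / 4 :=
    max_le (by positivity) (by nlinarith [sq_nonneg (x - a - (b - x))])
  calc cubicDensity a b x ≤ 6 / (b - a) ^ 3 * ((b - a) ^ 2 / 4) := by unfold cubicDensity; gcongr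
    _ = 3 / 2 / (b - a) := by field_simp; norm_num

theorem integral_cubicDensity (hab : a < b) : ∫ t in a..b, cubicDensity a b t = 1 := by
  have hba := (sub_pos.2 hab).ne'
  have hderiv : ∀ t, HasDerivAt (fun t => (b - a) / 2 * (t - a) ^ 2 - (t - a) ^ 3 / 3)
      ((t - a) * (b - t)) t := fun t => by
    have hsub := (hasDerivAt_id' t).sub_const a
    refine (((hsub.pow 2).const_mul ((b - a) / 2)).sub ((hsub.pow 3).div_const 3)).congr_deriv ?_
    norm_num
    ring
  have hmax : EqOn (fun t => max 0 ((t - a) * (b - t))) (fun t => (t - a) * (b - t)) (uIcc a b) :=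
    fun t ht => by
      rw [uIcc_of_le hab.le] at ht
      exact max_eq_right (mul_nonneg (sub_nonneg.2 ht.1) (sub_nonneg.2 ht.2))
  unfold cubicDensity
  rw [intervalIntegral.integral_const_mul, intervalIntegral.integral_congr hmax,
    intervalIntegral.integral_eq_sub_of_hasDerivAt (fun t _ => hderiv t)
      (Continuous.intervalIntegrable (by fun_prop) a b)]
  field_simp
  ring

/-- The cutoff function which is the cubic `3 y² - 2 y³`, `y = (x - a) / (b - a)`, on `[a, b]`. -/
noncomputable def cubic (hab : a < b) : Cutoff a b where
  toFun x := ∫ t in a..x, cubicDensity a b t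
  slope := cubicDensity a b
  hasDerivAt x := (continuous_cubicDensity.integral_hasStrictDerivAt a x).hasDerivAt
  continuous_slope := continuous_cubicDensity
  slope_nonneg := cubicDensity_nonneg hab.le
  eq_zero _ := integral_eq_zero_of_forall_le_eq_zero fun _ => cubicDensity_of_le hab.le
  eq_one x hx := by
    have hright : ∫ t in b..x, cubicDensity a b t = ∫ _ in b..x, 0 :=
      intervalIntegral.integral_congr fun t ht => by
        rw [uIcc_of_le hx] at ht
        exact cubicDensity_of_ge hab.le ht.1
    rw [← intervalIntegral.integral_add_adjacent_intervals
      (continuous_cubicDensity.intervalIntegrable a b)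
      (continuous_cubicDensity.intervalIntegrable b x), integral_cubicDensity hab, hright,
      intervalIntegral.integral_zero, add_zero]

end CubicDensity

variable {a b : ℝ} (φ : Cutoff a b)

theorem monotone : Monotone φ := monotone_of_hasDerivAt_nonneg φ.hasDerivAt φ.slope_nonneg

theorem nonneg (x : ℝ) : 0 ≤ φ x :=
  (φ.eq_zero _ (min_le_right x a)).ge.trans (φ.monotone (min_le_left x a))

theorem le_one (x : ℝ) : φ x ≤ 1 :=
  (φ.monotone (le_max_left x b)).trans (φ.eq_one _ (le_max_right x b)).le

theorem slope_eq_zero {x : ℝ} (hx : x ≤ a) : φ.slope x = 0 :=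
  hasDerivAt_eq_zero_of_forall_le_eq_zero (φ.hasDerivAt x) fun y hy => φ.eq_zero y (hy.trans hx)

theorem contDiff : ContDiff ℝ 1 φ :=
  contDiff_succ_of_hasDerivAt (n := 0) φ.hasDerivAt (contDiff_zero.2 φ.continuous_slope)

theorem monotone_mul_id (ha : 0 ≤ a) : Monotone fun x => φ x * x := by
  intro x y hxy
  dsimp only
  rcases le_total x a with hx | hx
  · rw [φ.eq_zero x hx, zero_mul]
    rcases le_total y a with hy | hy
    · rw [φ.eq_zero y hy, zero_mul]
    · exact mul_nonneg (φ.nonneg y) (ha.trans hy)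
  · exact mul_le_mul (φ.monotone hxy) hxy (ha.trans hx) (φ.nonneg y)

theorem div_id_eq_zero {x : ℝ} (hx : x ≤ a) : φ x / x = 0 := by rw [φ.eq_zero x hx, zero_div]

theorem div_id_nonneg (ha : 0 ≤ a) (x : ℝ) : 0 ≤ φ x / x := by
  rcases le_total x a with hx | hx
  · exact (φ.div_id_eq_zero hx).ge
  · exact div_nonneg (φ.nonneg x) (ha.trans hx)

theorem contDiff_div_id (ha : 0 < a) : ContDiff ℝ 1 fun x => φ x / x :=
  contDiff_div_id_of_forall_le_eq_zero ha φ.contDiff φ.eq_zero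

/-- The antiderivative of `φ` vanishing at `a`; it grows linearly. -/
noncomputable def primitive (x : ℝ) : ℝ := ∫ t in a..x, φ t

/-- The antiderivative of `φ(x) / x` vanishing at `a`; it grows logarithmically. -/
noncomputable def logPrimitive (x : ℝ) : ℝ := ∫ t in a..x, φ t / t

theorem hasDerivAt_primitive (x : ℝ) : HasDerivAt φ.primitive (φ x) x :=
  (φ.contDiff.continuous.integral_hasStrictDerivAt a x).hasDerivAt

theorem contDiff_primitive : ContDiff ℝ 2 φ.primitive :=
  contDiff_succ_of_hasDerivAt (n := 1) φ.hasDerivAt_primitive φ.contDiff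

theorem primitive_eq_zero {x : ℝ} (hx : x ≤ a) : φ.primitive x = 0 :=
  integral_eq_zero_of_forall_le_eq_zero φ.eq_zero hx

theorem primitive_nonneg (x : ℝ) : 0 ≤ φ.primitive x :=
  integral_nonneg_of_forall_le_eq_zero φ.eq_zero φ.nonneg x

theorem monotone_primitive : Monotone φ.primitive :=
  monotone_of_hasDerivAt_nonneg φ.hasDerivAt_primitive φ.nonneg

theorem primitive_le (hab : a ≤ b) {x : ℝ} (hx : x ≤ b) : φ.primitive x ≤ b - a :=
  calc φ.primitive x ≤ φ.primitive b := φ.monotone_primitive hx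
    _ ≤ ∫ _ in a..b, 1 := intervalIntegral.integral_mono_on hab
        (φ.contDiff.continuous.intervalIntegrable a b) intervalIntegrable_const
        fun t _ => φ.le_one t
    _ = b - a := by simp

theorem sub_le_primitive {x : ℝ} (hx : b ≤ x) : x - b ≤ φ.primitive x :=
  calc x - b = ∫ _ in b..x, 1 := by simp
    _ = ∫ t in b..x, φ t := intervalIntegral.integral_congr fun t ht => by
        rw [uIcc_of_le hx] at ht
        exact (φ.eq_one t ht.1).symm
    _ ≤ φ.primitive x := integral_le_integral_of_forall_le_eq_zero φ.contDiff.continuous φ.eq_zero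
        φ.nonneg b x

theorem tendsto_primitive : Tendsto φ.primitive atTop atTop := by
  refine tendsto_atTop_mono' _ ?_ (tendsto_atTop_add_const_right _ (-b) tendsto_id)
  filter_upwards [eventually_ge_atTop b] with x hx using φ.sub_le_primitive hx

theorem hasDerivAt_logPrimitive (ha : 0 < a) (x : ℝ) : HasDerivAt φ.logPrimitive (φ x / x) x :=
  ((φ.contDiff_div_id ha).continuous.integral_hasStrictDerivAt a x).hasDerivAt

theorem contDiff_logPrimitive (ha : 0 < a) : ContDiff ℝ 2 φ.logPrimitive :=
  contDiff_succ_of_hasDerivAt (n := 1) (φ.hasDerivAt_logPrimitive ha) (φ.contDiff_div_id ha)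

theorem logPrimitive_eq_zero {x : ℝ} (hx : x ≤ a) : φ.logPrimitive x = 0 :=
  integral_eq_zero_of_forall_le_eq_zero (fun _ => φ.div_id_eq_zero) hx

theorem logPrimitive_nonneg (ha : 0 ≤ a) (x : ℝ) : 0 ≤ φ.logPrimitive x :=
  integral_nonneg_of_forall_le_eq_zero (fun _ => φ.div_id_eq_zero) (φ.div_id_nonneg ha) x

theorem log_div_le_logPrimitive (ha : 0 < a) (hb : 0 < b) {x : ℝ} (hx : b ≤ x) :
    Real.log (x / b) ≤ φ.logPrimitive x :=
  calc Real.log (x / b) = ∫ t in b..x, t⁻¹ := (integral_inv_of_pos hb (hb.trans_le hx)).symm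
    _ = ∫ t in b..x, φ t / t := intervalIntegral.integral_congr fun t ht => by
        rw [uIcc_of_le hx] at ht
        rw [φ.eq_one t ht.1, one_div]
    _ ≤ φ.logPrimitive x := integral_le_integral_of_forall_le_eq_zero
        (φ.contDiff_div_id ha).continuous (fun _ => φ.div_id_eq_zero)
        (φ.div_id_nonneg ha.le) b x

theorem tendsto_logPrimitive (ha : 0 < a) (hb : 0 < b) : Tendsto φ.logPrimitive atTop atTop := by
  refine tendsto_atTop_mono' _ ?_
    (Real.tendsto_log_atTop.comp (tendsto_id.atTop_div_const hb))
  filter_upwards [eventually_ge_atTop b] with x hx using φ.log_div_le_logPrimitive ha hb hx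

end Cutoff

/-! ### The fluid invariant -/

/-- The function `log x₂ + (x₁ + β) / x₂`, constant along the fluid trajectories
`x₁' = -x₁ + x₂ - β`, `x₂' = -x₂` off the axis `x₂ = 0`. -/
noncomputable def fluidInvariant (β x1 x2 : ℝ) : ℝ := Real.log x2 + (x1 + β) / x2

section FluidInvariant

variable {β : ℝ}

theorem hasDerivAt_fluidInvariant_fst (x1 x2 : ℝ) :
    HasDerivAt (fun t => fluidInvariant β t x2) (1 / x2) x1 :=
  (((hasDerivAt_id' x1).add_const β).div_const x2).const_add (Real.log x2)

theorem hasDerivAt_fluidInvariant_snd (x1 : ℝ) {x2 : ℝ} (hx2 : x2 ≠ 0) :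
    HasDerivAt (fun t => fluidInvariant β x1 t) (1 / x2 - (x1 + β) / x2 ^ 2) x2 := by
  refine ((Real.hasDerivAt_log hx2).add
    ((hasDerivAt_const x2 (x1 + β)).div (hasDerivAt_id' x2) hx2)).congr_deriv ?_
  ring

theorem contDiffAt_fluidInvariant {n : WithTop ℕ∞} {p : ℝ × ℝ} (hp : p.2 ≠ 0) :
    ContDiffAt ℝ n (fun p : ℝ × ℝ => fluidInvariant β p.1 p.2) p :=
  (contDiffAt_snd.log hp).add ((contDiffAt_fst.add contDiffAt_const).div contDiffAt_snd hp)

theorem fluidInvariant_mono_fst {x1 y1 x2 : ℝ} (h : x1 ≤ y1) (hx2 : 0 ≤ x2) :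
    fluidInvariant β x1 x2 ≤ fluidInvariant β y1 x2 := by
  unfold fluidInvariant
  gcongr

theorem fluidInvariant_zero_mono (hβ : 0 < β) {x2 y2 : ℝ} (hx2 : β ≤ x2) (h : x2 ≤ y2) :
    fluidInvariant β 0 x2 ≤ fluidInvariant β 0 y2 := by
  have hx0 : 0 < x2 := hβ.trans_le hx2
  have hy0 : 0 < y2 := hx0.trans_le h
  have hlog : 1 - x2 / y2 ≤ Real.log y2 - Real.log x2 := by
    rw [← Real.log_div hy0.ne' hx0.ne', ← inv_div y2 x2]
    exact Real.one_sub_inv_le_log_of_pos (div_pos hy0 hx0)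
  have hdiv : β / x2 - β / y2 ≤ 1 - x2 / y2 :=
    calc β / x2 - β / y2 = β / x2 * (1 - x2 / y2) := by field_simp
      _ ≤ 1 * (1 - x2 / y2) := by
        have := sub_nonneg.2 ((div_le_one hy0).2 h)
        gcongr
        exact (div_le_one hx0).2 hx2
      _ = 1 - x2 / y2 := one_mul _
  simp only [fluidInvariant, zero_add]
  linarith

end FluidInvariant

/-- The function `q ∘ fluidInvariant β`, replaced by `0` for `x₂ ≤ κ`. On `x₁ ≤ 0` the two pieces
glue smoothly if `β < κ` and `q` vanishes up to `fluidInvariant β 0 κ`. -/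
noncomputable def fluidLift (β κ : ℝ) (q : ℝ → ℝ) (x1 x2 : ℝ) : ℝ :=
  if x2 ≤ κ then 0 else q (fluidInvariant β x1 x2)

section FluidLift

variable {β κ x1 x2 : ℝ} {q q' : ℝ → ℝ}

theorem fluidLift_of_le (hx2 : x2 ≤ κ) : fluidLift β κ q x1 x2 = 0 := if_pos hx2

theorem fluidLift_of_lt (hx2 : κ < x2) : fluidLift β κ q x1 x2 = q (fluidInvariant β x1 x2) :=
  if_neg hx2.not_ge

theorem fluidLift_of_nonpos (hβ : 0 < β) (hq : ∀ t ≤ fluidInvariant β 0 κ, q t = 0)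
    (hx1 : x1 ≤ 0) (hx2 : β ≤ x2) : fluidLift β κ q x1 x2 = q (fluidInvariant β x1 x2) := by
  rcases le_or_gt x2 κ with h | h
  · rw [fluidLift_of_le h, hq]
    exact (fluidInvariant_mono_fst hx1 (hβ.le.trans hx2)).trans (fluidInvariant_zero_mono hβ hx2 h)
  · exact fluidLift_of_lt h

theorem fluidLift_nonneg (hq : ∀ t, 0 ≤ q t) : 0 ≤ fluidLift β κ q x1 x2 := by
  unfold fluidLift
  split_ifs
  exacts [le_rfl, hq _]

theorem hasDerivAt_fluidLift_fst (hq : ∀ t, HasDerivAt q (q' t) t) (x1 x2 : ℝ) :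
    HasDerivAt (fun t => fluidLift β κ q t x2) (fluidLift β κ q' x1 x2 / x2) x1 := by
  unfold fluidLift
  split_ifs
  · rw [zero_div]
    exact hasDerivAt_const x1 0
  · exact ((hq _).comp x1 (hasDerivAt_fluidInvariant_fst x1 x2)).congr_deriv (mul_one_div _ _)

theorem hasDerivAt_fluidLift_snd (hβ : 0 < β) (hκ : β < κ) (hq : ∀ t, HasDerivAt q (q' t) t)
    (hq0 : ∀ t ≤ fluidInvariant β 0 κ, q t = 0) (hx1 : x1 ≤ 0) (x2 : ℝ) :
    HasDerivAt (fun t => fluidLift β κ q x1 t)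
      (fluidLift β κ q' x1 x2 * (1 / x2 - (x1 + β) / x2 ^ 2)) x2 := by
  rcases lt_or_ge x2 κ with h | h
  · rw [fluidLift_of_le h.le, zero_mul]
    refine (hasDerivAt_const x2 (0 : ℝ)).congr_of_eventuallyEq ?_
    filter_upwards [gt_mem_nhds h] with t ht using fluidLift_of_le ht.le
  · have hq'0 : ∀ t ≤ fluidInvariant β 0 κ, q' t = 0 := fun t ht =>
      hasDerivAt_eq_zero_of_forall_le_eq_zero (hq t) fun s hs => hq0 s (hs.trans ht)
    have hβx : β < x2 := hκ.trans_le h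
    rw [fluidLift_of_nonpos hβ hq'0 hx1 hβx.le]
    refine ((hq _).comp x2
      (hasDerivAt_fluidInvariant_snd x1 (hβ.trans hβx).ne')).congr_of_eventuallyEq ?_
    filter_upwards [lt_mem_nhds hβx] with t ht using fluidLift_of_nonpos hβ hq0 hx1 ht.le

theorem contDiffOn_fluidLift {n : WithTop ℕ∞} (hβ : 0 < β) (hκ : β < κ) (hq : ContDiff ℝ n q)
    (hq0 : ∀ t ≤ fluidInvariant β 0 κ, q t = 0) :
    ContDiffOn ℝ n (fun p : ℝ × ℝ => fluidLift β κ q p.1 p.2) (Iic 0 ×ˢ Ici 0) := by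
  rintro p ⟨hp1, -⟩
  rcases lt_or_ge p.2 κ with h | h
  · refine (contDiffWithinAt_const (c := (0 : ℝ))).congr_of_eventuallyEq ?_ (fluidLift_of_le h.le)
    filter_upwards [mem_nhdsWithin_of_mem_nhds (continuousAt_snd.eventually (gt_mem_nhds h))]
      with r hr using fluidLift_of_le hr.le
  · have hβp : β < p.2 := hκ.trans_le h
    refine (hq.contDiffAt.comp p (contDiffAt_fluidInvariant
      (hβ.trans hβp).ne')).contDiffWithinAt.congr_of_eventuallyEq ?_
        (fluidLift_of_nonpos hβ hq0 hp1 hβp.le)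
    filter_upwards [mem_nhdsWithin_of_mem_nhds (continuousAt_snd.eventually (lt_mem_nhds hβp)),
      self_mem_nhdsWithin] with r hr hmem using fluidLift_of_nonpos hβ hq0 hmem.1 hr.le

theorem fluidLift_transport (hκ : 0 ≤ κ) (x1 x2 : ℝ) :
    (-x1 + x2 - β) * (fluidLift β κ q x1 x2 / x2) -
      x2 * (fluidLift β κ q x1 x2 * (1 / x2 - (x1 + β) / x2 ^ 2)) = 0 := by
  rcases le_or_gt x2 κ with h | h
  · rw [fluidLift_of_le h]
    ring
  · have := hκ.trans_lt h
    field_simp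
    ring

end FluidLift

/-- The derivative of `fluidInvariant β 0` on `[κ, ∞)`, continued by a constant on `(-∞, κ]` to
keep it positive. -/
noncomputable def clockRate (β κ z : ℝ) : ℝ := (max z κ - β) / max z κ ^ 2

/-- An increasing bijection of `ℝ` that coincides with `fluidInvariant β 0` on `[κ, ∞)` and is
affine on `(-∞, κ]`. -/
noncomputable def clock (β κ z : ℝ) : ℝ := fluidInvariant β 0 κ + ∫ t in κ..z, clockRate β κ t

section Clock

variable {β κ : ℝ}

theorem clockRate_of_ge {z : ℝ} (hz : κ ≤ z) : clockRate β κ z = (z - β) / z ^ 2 := by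
  rw [clockRate, max_eq_left hz]

theorem clockRate_of_le {z : ℝ} (hz : z ≤ κ) : clockRate β κ z = (κ - β) / κ ^ 2 := by
  rw [clockRate, max_eq_right hz]

theorem clockRate_pos (hβ : 0 < β) (hκ : β < κ) (z : ℝ) : 0 < clockRate β κ z := by
  have hz : β < max z κ := hκ.trans_le (le_max_right z κ)
  exact div_pos (sub_pos.2 hz) (pow_pos (hβ.trans hz) 2)

theorem continuous_clockRate (hκ : 0 < κ) : Continuous (clockRate β κ) :=
  Continuous.div (by fun_prop) (by fun_prop) fun z =>
    (pow_pos (hκ.trans_le (le_max_right z κ)) 2).ne'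

theorem hasDerivAt_clock (hκ : 0 < κ) (z : ℝ) : HasDerivAt (clock β κ) (clockRate β κ z) z :=
  ((continuous_clockRate hκ).integral_hasStrictDerivAt κ z).hasDerivAt.const_add _

theorem strictMono_clock (hβ : 0 < β) (hκ : β < κ) : StrictMono (clock β κ) :=
  strictMono_of_hasDerivAt_pos (hasDerivAt_clock (hβ.trans hκ)) (clockRate_pos hβ hκ)

theorem clock_of_ge (hκ : 0 < κ) {z : ℝ} (hz : κ ≤ z) : clock β κ z = fluidInvariant β 0 z := by
  have hderiv : ∀ t ∈ uIcc κ z, HasDerivAt (fluidInvariant β 0) (clockRate β κ t) t := by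
    intro t ht
    rw [uIcc_of_le hz] at ht
    have ht0 : t ≠ 0 := (hκ.trans_le ht.1).ne'
    refine (hasDerivAt_fluidInvariant_snd 0 ht0).congr_deriv ?_
    rw [clockRate_of_ge ht.1]
    field_simp
    ring
  rw [clock, intervalIntegral.integral_eq_sub_of_hasDerivAt hderiv
    ((continuous_clockRate hκ).intervalIntegrable κ z), add_sub_cancel]

theorem clock_of_le {z : ℝ} (hz : z ≤ κ) :
    clock β κ z = fluidInvariant β 0 κ + (z - κ) * ((κ - β) / κ ^ 2) := by
  have hcongr : EqOn (clockRate β κ) (fun _ => (κ - β) / κ ^ 2) (uIcc κ z) := fun t ht => by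
    rw [uIcc_of_ge hz] at ht
    exact clockRate_of_le ht.2
  rw [clock, intervalIntegral.integral_congr hcongr, intervalIntegral.integral_const, smul_eq_mul]

theorem tendsto_clock_atTop (hβ : 0 ≤ β) (hκ : 0 < κ) : Tendsto (clock β κ) atTop atTop := by
  refine tendsto_atTop_mono' _ ?_ Real.tendsto_log_atTop
  filter_upwards [eventually_ge_atTop κ] with z hz
  have : 0 < z := hκ.trans_le hz
  rw [clock_of_ge hκ hz, fluidInvariant, zero_add, le_add_iff_nonneg_right]
  positivity

theorem tendsto_clock_atBot (hβ : 0 < β) (hκ : β < κ) : Tendsto (clock β κ) atBot atBot := by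
  have hslope : 0 < (κ - β) / κ ^ 2 := div_pos (sub_pos.2 hκ) (pow_pos (hβ.trans hκ) 2)
  have haffine :
      Tendsto (fun z => fluidInvariant β 0 κ + (z - κ) * ((κ - β) / κ ^ 2)) atBot atBot :=
    tendsto_atBot_add_const_left _ _
      ((tendsto_atBot_add_const_right _ (-κ) tendsto_id).atBot_mul_const hslope)
  refine haffine.congr' ?_
  filter_upwards [eventually_le_atBot κ] with z hz using (clock_of_le hz).symm

theorem surjective_clock (hβ : 0 < β) (hκ : β < κ) : Function.Surjective (clock β κ) := by
  have hcont : Continuous (clock β κ) :=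
    continuous_iff_continuousAt.2 fun z => (hasDerivAt_clock (hβ.trans hκ) z).continuousAt
  exact hcont.surjective (tendsto_clock_atTop hβ.le (hβ.trans hκ)) (tendsto_clock_atBot hβ hκ)

/-- The inverse of `clock β κ`: the fluid trajectory on which `fluidInvariant β` equals `t` meets
the boundary `x₁ = 0` at height `crossing t` if that height is at least `κ`. -/
noncomputable def crossing (hβ : 0 < β) (hκ : β < κ) : ℝ ≃o ℝ :=
  ((strictMono_clock hβ hκ).orderIsoOfSurjective (clock β κ) (surjective_clock hβ hκ)).symm

theorem hasDerivAt_crossing (hβ : 0 < β) (hκ : β < κ) (t : ℝ) :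
    HasDerivAt (crossing hβ hκ) (clockRate β κ (crossing hβ hκ t))⁻¹ t :=
  (hasDerivAt_clock (hβ.trans hκ) _).of_local_left_inverse
    (crossing hβ hκ).continuous.continuousAt (clockRate_pos hβ hκ _).ne'
    (Eventually.of_forall (crossing hβ hκ).symm_apply_apply)

theorem crossing_fluidInvariant (hβ : 0 < β) (hκ : β < κ) {z : ℝ} (hz : κ ≤ z) :
    crossing hβ hκ (fluidInvariant β 0 z) = z := by
  rw [← clock_of_ge (hβ.trans hκ) hz]
  exact (crossing hβ hκ).apply_symm_apply z

theorem crossing_le (hβ : 0 < β) (hκ : β < κ) {t z : ℝ} (hz : κ ≤ z)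
    (ht : t ≤ fluidInvariant β 0 z) : crossing hβ hκ t ≤ z :=
  ((crossing hβ hκ).monotone ht).trans_eq (crossing_fluidInvariant hβ hκ hz)

end Clock

namespace Cutoff

section CrossingProfile

variable {β κ b : ℝ} (hβ : 0 < β) (hκ : β < κ) (φ : Cutoff κ b)

/-- The antiderivative of `φ(z) (1 / β - 1 / z)` vanishing at `κ`. -/
noncomputable def boundaryPotential (β : ℝ) (φ : Cutoff κ b) (z : ℝ) : ℝ :=
  φ.primitive z / β - φ.logPrimitive z

/-- The solution `q` of `q'(fluidInvariant β 0 z) = φ(z) z / β`: this equation makes the oblique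
derivative of `q ∘ fluidInvariant β` at `(0, z)` equal to `φ(z) / z`. -/
noncomputable def crossingProfile (t : ℝ) : ℝ := φ.boundaryPotential β (crossing hβ hκ t)

/-- The first derivative of `crossingProfile`. -/
noncomputable def crossingProfileDeriv (t : ℝ) : ℝ := φ (crossing hβ hκ t) * crossing hβ hκ t / β

/-- The second derivative of `crossingProfile`. -/
noncomputable def crossingProfileDeriv₂ (t : ℝ) : ℝ :=
  (φ.slope (crossing hβ hκ t) * crossing hβ hκ t + φ (crossing hβ hκ t)) / β *
    (clockRate β κ (crossing hβ hκ t))⁻¹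

theorem boundaryPotential_eq_zero {z : ℝ} (hz : z ≤ κ) : φ.boundaryPotential β z = 0 := by
  rw [boundaryPotential, φ.primitive_eq_zero hz, φ.logPrimitive_eq_zero hz, zero_div, sub_zero]

theorem hasDerivAt_boundaryPotential (hκ0 : 0 < κ) (z : ℝ) :
    HasDerivAt (φ.boundaryPotential β) (φ z / β - φ z / z) z :=
  ((φ.hasDerivAt_primitive z).div_const β).sub (φ.hasDerivAt_logPrimitive hκ0 z)

include hβ hκ in
theorem monotone_boundaryPotential : Monotone (φ.boundaryPotential β) := by
  refine monotone_of_hasDerivAt_nonneg (φ.hasDerivAt_boundaryPotential (hβ.trans hκ)) fun z => ?_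
  rcases le_total z κ with hz | hz
  · simp [φ.eq_zero z hz]
  · exact sub_nonneg.2 (div_le_div_of_nonneg_left (φ.nonneg z) hβ (hκ.le.trans hz))

include hβ hκ in
theorem boundaryPotential_nonneg (z : ℝ) : 0 ≤ φ.boundaryPotential β z :=
  (φ.boundaryPotential_eq_zero (min_le_right z κ)).ge.trans
    (φ.monotone_boundaryPotential hβ hκ (min_le_left z κ))

theorem hasDerivAt_crossingProfile (t : ℝ) :
    HasDerivAt (φ.crossingProfile hβ hκ) (φ.crossingProfileDeriv hβ hκ t) t := by
  refine ((φ.hasDerivAt_boundaryPotential (hβ.trans hκ) _).comp t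
    (hasDerivAt_crossing hβ hκ t)).congr_deriv ?_
  unfold crossingProfileDeriv
  set w := crossing hβ hκ t
  rcases le_total w κ with hw | hw
  · simp [φ.eq_zero w hw]
  · have hwβ : w - β ≠ 0 := (sub_pos.2 (hκ.trans_le hw)).ne'
    have hw0 : w ≠ 0 := ((hβ.trans hκ).trans_le hw).ne'
    rw [clockRate_of_ge hw]
    field_simp

theorem hasDerivAt_crossingProfileDeriv (t : ℝ) :
    HasDerivAt (φ.crossingProfileDeriv hβ hκ) (φ.crossingProfileDeriv₂ hβ hκ t) t := by
  have hcross := hasDerivAt_crossing hβ hκ t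
  refine ((((φ.hasDerivAt _).comp t hcross).mul hcross).div_const β).congr_deriv ?_
  simp only [crossingProfileDeriv₂, Function.comp_apply]
  ring

theorem continuous_crossingProfileDeriv₂ : Continuous (φ.crossingProfileDeriv₂ hβ hκ) := by
  have hcross := (crossing hβ hκ).continuous
  have hrate := (continuous_clockRate (β := β) (hβ.trans hκ)).comp hcross
  exact ((((φ.continuous_slope.comp hcross).mul hcross).add
    (φ.contDiff.continuous.comp hcross)).div_const β).mul
      (hrate.inv₀ fun t => (clockRate_pos hβ hκ _).ne')

theorem contDiff_crossingProfile : ContDiff ℝ 2 (φ.crossingProfile hβ hκ) :=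
  contDiff_two_of_hasDerivAt (φ.hasDerivAt_crossingProfile hβ hκ)
    (φ.hasDerivAt_crossingProfileDeriv hβ hκ) (φ.continuous_crossingProfileDeriv₂ hβ hκ)

theorem crossingProfile_nonneg (t : ℝ) : 0 ≤ φ.crossingProfile hβ hκ t :=
  φ.boundaryPotential_nonneg hβ hκ _

theorem crossingProfile_eq_zero {t : ℝ} (ht : t ≤ fluidInvariant β 0 κ) :
    φ.crossingProfile hβ hκ t = 0 :=
  φ.boundaryPotential_eq_zero (crossing_le hβ hκ le_rfl ht)

theorem crossingProfile_le {t z : ℝ} (hz : κ ≤ z) (ht : t ≤ fluidInvariant β 0 z) :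
    φ.crossingProfile hβ hκ t ≤ φ.boundaryPotential β z :=
  φ.monotone_boundaryPotential hβ hκ (crossing_le hβ hκ hz ht)

theorem crossingProfileDeriv_fluidInvariant {z : ℝ} (hz : κ ≤ z) :
    φ.crossingProfileDeriv hβ hκ (fluidInvariant β 0 z) = φ z * z / β := by
  rw [crossingProfileDeriv, crossing_fluidInvariant hβ hκ hz]

theorem crossingProfileDeriv_nonneg (t : ℝ) : 0 ≤ φ.crossingProfileDeriv hβ hκ t := by
  refine div_nonneg ?_ hβ.le
  set w := crossing hβ hκ t
  rcases le_total w κ with hw | hw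
  · rw [φ.eq_zero w hw, zero_mul]
  · exact mul_nonneg (φ.nonneg w) ((hβ.trans hκ).le.trans hw)

theorem crossingProfileDeriv_le {t z : ℝ} (hz : κ ≤ z) (ht : t ≤ fluidInvariant β 0 z) :
    φ.crossingProfileDeriv hβ hκ t ≤ z / β := by
  have hz0 : 0 ≤ z := (hβ.trans hκ).le.trans hz
  unfold crossingProfileDeriv
  gcongr
  calc φ (crossing hβ hκ t) * crossing hβ hκ t ≤ φ z * z :=
        φ.monotone_mul_id (hβ.trans hκ).le (crossing_le hβ hκ hz ht)
    _ ≤ z := mul_le_of_le_one_left hz0 (φ.le_one z)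

theorem crossingProfileDeriv₂_le {M t z : ℝ} (hM : ∀ x, φ.slope x ≤ M) (hz : κ ≤ z)
    (ht : t ≤ fluidInvariant β 0 z) :
    φ.crossingProfileDeriv₂ hβ hκ t ≤ (M * κ + 1) / (β * (κ - β)) * z ^ 2 := by
  have hκ0 : 0 < κ := hβ.trans hκ
  have hκβ : 0 < κ - β := sub_pos.2 hκ
  have hM0 : 0 ≤ M := (φ.slope_nonneg 0).trans (hM 0)
  have hwz : crossing hβ hκ t ≤ z := crossing_le hβ hκ hz ht
  unfold crossingProfileDeriv₂
  set w := crossing hβ hκ t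
  rcases le_total w κ with hw | hw
  · rw [φ.slope_eq_zero hw, φ.eq_zero w hw, zero_mul, zero_add, zero_div, zero_mul]
    positivity
  · have hw0 : 0 < w := hκ0.trans_le hw
    have hwβ : 0 < w - β := sub_pos.2 (hκ.trans_le hw)
    -- `w ↦ w / (w - β)` and `w ↦ 1 / (w - β)` are decreasing.
    have hfactor : (φ.slope w * w + φ w) / (w - β) ≤ (M * κ + 1) / (κ - β) := by
      have hdecr : w / (w - β) ≤ κ / (κ - β) := by
        rw [div_le_div_iff₀ hwβ hκβ]
        nlinarith
      calc (φ.slope w * w + φ w) / (w - β) = φ.slope w * (w / (w - β)) + φ w / (w - β) := by ring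
        _ ≤ M * (κ / (κ - β)) + 1 / (κ - β) := by
          gcongr
          exacts [hM w, φ.le_one w]
        _ = (M * κ + 1) / (κ - β) := by ring
    calc (φ.slope w * w + φ w) / β * (clockRate β κ w)⁻¹
        = (φ.slope w * w + φ w) / (w - β) / β * w ^ 2 := by
          rw [clockRate_of_ge hw, inv_div]
          field_simp
      _ ≤ (M * κ + 1) / (κ - β) / β * z ^ 2 := by gcongr
      _ = (M * κ + 1) / (β * (κ - β)) * z ^ 2 := by rw [div_div, mul_comm β]

end CrossingProfile

end Cutoff

/-! ### Functions with the oblique boundary condition -/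

/-- A `C²` function `val` on `Ω = (-∞, 0] × [0, ∞)` with the oblique boundary condition
`∂₁ val = ∂₂ val` on `x₁ = 0`, bundled with those of its one-sided partial derivatives that enter
the generator. -/
structure ObliqueFunction where
  val : ℝ → ℝ → ℝ
  d₁ : ℝ → ℝ → ℝ
  d₂ : ℝ → ℝ → ℝ
  d₁₁ : ℝ → ℝ → ℝ
  contDiffOn : ContDiffOn ℝ 2 (fun p : ℝ × ℝ => val p.1 p.2) (Iic 0 ×ˢ Ici 0)
  hasDerivWithinAt_fst : ∀ x1 ≤ 0, ∀ x2, 0 ≤ x2 →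
    HasDerivWithinAt (fun t => val t x2) (d₁ x1 x2) (Iic 0) x1
  hasDerivWithinAt_snd : ∀ x1 ≤ 0, ∀ x2, 0 ≤ x2 →
    HasDerivWithinAt (fun t => val x1 t) (d₂ x1 x2) (Ici 0) x2
  hasDerivWithinAt_fst_fst : ∀ x1 ≤ 0, ∀ x2, 0 ≤ x2 →
    HasDerivWithinAt (fun t => d₁ t x2) (d₁₁ x1 x2) (Iic 0) x1
  oblique : ∀ x2, 0 ≤ x2 → d₁ 0 x2 = d₂ 0 x2

namespace ObliqueFunction

/-- The first-order part of the generator `G_Y`, that is, the derivative along the fluid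
trajectories. -/
def fluidDrift (β : ℝ) (F : ObliqueFunction) (x1 x2 : ℝ) : ℝ :=
  (-x1 + x2 - β) * F.d₁ x1 x2 - x2 * F.d₂ x1 x2

/-- The diffusion generator `G_Y`. -/
def generator (β : ℝ) (F : ObliqueFunction) (x1 x2 : ℝ) : ℝ :=
  F.fluidDrift β x1 x2 + F.d₁₁ x1 x2

/-- The sum of two functions satisfying the oblique boundary condition. -/
def add (F G : ObliqueFunction) : ObliqueFunction where
  val x1 x2 := F.val x1 x2 + G.val x1 x2
  d₁ x1 x2 := F.d₁ x1 x2 + G.d₁ x1 x2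
  d₂ x1 x2 := F.d₂ x1 x2 + G.d₂ x1 x2
  d₁₁ x1 x2 := F.d₁₁ x1 x2 + G.d₁₁ x1 x2
  contDiffOn := F.contDiffOn.add G.contDiffOn
  hasDerivWithinAt_fst x1 h1 x2 h2 :=
    (F.hasDerivWithinAt_fst x1 h1 x2 h2).add (G.hasDerivWithinAt_fst x1 h1 x2 h2)
  hasDerivWithinAt_snd x1 h1 x2 h2 :=
    (F.hasDerivWithinAt_snd x1 h1 x2 h2).add (G.hasDerivWithinAt_snd x1 h1 x2 h2)
  hasDerivWithinAt_fst_fst x1 h1 x2 h2 :=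
    (F.hasDerivWithinAt_fst_fst x1 h1 x2 h2).add (G.hasDerivWithinAt_fst_fst x1 h1 x2 h2)
  oblique x2 h2 := congrArg₂ (· + ·) (F.oblique x2 h2) (G.oblique x2 h2)

/-- The exponential `exp (α F)`. -/
noncomputable def expMul (α : ℝ) (F : ObliqueFunction) : ObliqueFunction where
  val x1 x2 := Real.exp (α * F.val x1 x2)
  d₁ x1 x2 := Real.exp (α * F.val x1 x2) * (α * F.d₁ x1 x2)
  d₂ x1 x2 := Real.exp (α * F.val x1 x2) * (α * F.d₂ x1 x2)
  d₁₁ x1 x2 := Real.exp (α * F.val x1 x2) * (α * F.d₁ x1 x2) * (α * F.d₁ x1 x2) +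
    Real.exp (α * F.val x1 x2) * (α * F.d₁₁ x1 x2)
  contDiffOn := (contDiffOn_const.mul F.contDiffOn).exp
  hasDerivWithinAt_fst x1 h1 x2 h2 := ((F.hasDerivWithinAt_fst x1 h1 x2 h2).const_mul α).exp
  hasDerivWithinAt_snd x1 h1 x2 h2 := ((F.hasDerivWithinAt_snd x1 h1 x2 h2).const_mul α).exp
  hasDerivWithinAt_fst_fst x1 h1 x2 h2 :=
    ((F.hasDerivWithinAt_fst x1 h1 x2 h2).const_mul α).exp.mul
      ((F.hasDerivWithinAt_fst_fst x1 h1 x2 h2).const_mul α)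
  oblique x2 h2 := by rw [F.oblique x2 h2]

theorem fluidDrift_add (β : ℝ) (F G : ObliqueFunction) (x1 x2 : ℝ) :
    (F.add G).fluidDrift β x1 x2 = F.fluidDrift β x1 x2 + G.fluidDrift β x1 x2 := by
  simp only [fluidDrift, add]
  ring

theorem generator_expMul (α β : ℝ) (F : ObliqueFunction) (x1 x2 : ℝ) :
    (F.expMul α).generator β x1 x2 = α * (Real.exp (α * F.val x1 x2) *
      (F.fluidDrift β x1 x2 + (F.d₁₁ x1 x2 + α * F.d₁ x1 x2 ^ 2))) := by
  simp only [generator, fluidDrift, expMul]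
  ring

theorem generator_expMul_le {α β c D x1 x2 : ℝ} {F : ObliqueFunction} (hα : 0 ≤ α)
    (hsecond : F.d₁₁ x1 x2 + α * F.d₁ x1 x2 ^ 2 ≤ 1 - c) (hdrift : F.fluidDrift β x1 x2 ≤ 0)
    (hbox : F.fluidDrift β x1 x2 ≤ -1 ∨ F.val x1 x2 ≤ D) :
    (F.expMul α).generator β x1 x2 ≤
      -(α * c) * (F.expMul α).val x1 x2 + α * Real.exp (α * D) := by
  have hexcess : Real.exp (α * F.val x1 x2) * (1 + F.fluidDrift β x1 x2) ≤ Real.exp (α * D) := by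
    rcases hbox with hout | hin
    · exact (mul_nonpos_of_nonneg_of_nonpos (Real.exp_pos _).le (by linarith)).trans
        (Real.exp_pos _).le
    · calc Real.exp (α * F.val x1 x2) * (1 + F.fluidDrift β x1 x2)
          ≤ Real.exp (α * F.val x1 x2) :=
            mul_le_of_le_one_right (Real.exp_pos _).le (by linarith)
        _ ≤ Real.exp (α * D) := by gcongr
  calc (F.expMul α).generator β x1 x2
      ≤ α * (Real.exp (α * F.val x1 x2) * (F.fluidDrift β x1 x2 + (1 - c))) := by
        rw [generator_expMul]
        gcongr
    _ = -(α * c) * Real.exp (α * F.val x1 x2) +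
        α * (Real.exp (α * F.val x1 x2) * (1 + F.fluidDrift β x1 x2)) := by ring
    _ ≤ -(α * c) * (F.expMul α).val x1 x2 + α * Real.exp (α * D) :=
        add_le_add le_rfl (mul_le_mul_of_nonneg_left hexcess hα)

/-- The property `F(x) → ∞` as `|x| → ∞` in `Ω`. -/
def Coercive (F : ObliqueFunction) : Prop :=
  ∀ M : ℝ, ∃ R : ℝ, ∀ x1 ≤ 0, ∀ x2, 0 ≤ x2 → R ≤ ‖(x1, x2)‖ → M ≤ F.val x1 x2

theorem coercive_of_tendsto {F : ObliqueFunction} {u v : ℝ → ℝ} (hu : Tendsto u atTop atTop)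
    (hv : Tendsto v atTop atTop)
    (hFu : ∀ x1 ≤ 0, ∀ x2, 0 ≤ x2 → u (-x1) ≤ F.val x1 x2)
    (hFv : ∀ x1 ≤ 0, ∀ x2, 0 ≤ x2 → v x2 ≤ F.val x1 x2) : F.Coercive := by
  intro M
  obtain ⟨A, hA⟩ := eventually_atTop.1 (hu.eventually_ge_atTop M)
  obtain ⟨B, hB⟩ := eventually_atTop.1 (hv.eventually_ge_atTop M)
  refine ⟨max A B, fun x1 h1 x2 h2 hR => ?_⟩
  rw [Prod.norm_mk, Real.norm_of_nonpos h1, Real.norm_of_nonneg h2] at hR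
  rcases le_max_iff.1 hR with h | h
  · exact (hA _ ((le_max_left A B).trans h)).trans (hFu x1 h1 x2 h2)
  · exact (hB _ ((le_max_right A B).trans h)).trans (hFv x1 h1 x2 h2)

theorem Coercive.expMul {α : ℝ} {F : ObliqueFunction} (hF : F.Coercive) (hα : 0 < α) :
    (F.expMul α).Coercive := by
  intro M
  obtain ⟨R, hR⟩ := hF (M / α)
  refine ⟨R, fun x1 h1 x2 h2 h => ?_⟩
  calc M ≤ α * F.val x1 x2 := (div_le_iff₀' hα).1 (hR x1 h1 x2 h2 h)
    _ ≤ Real.exp (α * F.val x1 x2) := (lt_add_one _).le.trans (Real.add_one_le_exp _)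

/-! ### The Lyapunov function -/

section HorizontalBarrier

variable {a b : ℝ} (ha : 0 ≤ a) (φ : Cutoff a b)

/-- The function `s g(-x₁)` with `g' = φ`, which controls the drift for large `-x₁`. -/
noncomputable def horizontalBarrier (s : ℝ) : ObliqueFunction where
  val x1 _ := s * φ.primitive (-x1)
  d₁ x1 _ := -(s * φ (-x1))
  d₂ _ _ := 0
  d₁₁ x1 _ := s * φ.slope (-x1)
  contDiffOn := (contDiff_const.mul (φ.contDiff_primitive.comp contDiff_fst.neg)).contDiffOn
  hasDerivWithinAt_fst x1 _ _ _ :=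
    ((((φ.hasDerivAt_primitive (-x1)).comp x1 (hasDerivAt_neg' x1)).const_mul s).congr_deriv
      (by ring)).hasDerivWithinAt
  hasDerivWithinAt_snd _ _ _ _ := hasDerivWithinAt_const _ _ _
  hasDerivWithinAt_fst_fst x1 _ _ _ :=
    ((((φ.hasDerivAt (-x1)).comp x1 (hasDerivAt_neg' x1)).const_mul s).neg.congr_deriv
      (by ring)).hasDerivWithinAt
  oblique _ _ := by rw [neg_zero, φ.eq_zero 0 ha, mul_zero, neg_zero]

variable {β s x1 x2 : ℝ}

theorem fluidDrift_horizontalBarrier :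
    (horizontalBarrier ha φ s).fluidDrift β x1 x2 = -(s * φ (-x1) * (-x1 + x2 - β)) := by
  simp only [fluidDrift, horizontalBarrier]
  ring

theorem fluidDrift_horizontalBarrier_nonpos (hβ : β ≤ a) (hs : 0 ≤ s) (hx2 : 0 ≤ x2) :
    (horizontalBarrier ha φ s).fluidDrift β x1 x2 ≤ 0 := by
  rw [fluidDrift_horizontalBarrier, neg_nonpos]
  rcases le_total (-x1) a with h | h
  · simp [φ.eq_zero _ h]
  · exact mul_nonneg (mul_nonneg hs (φ.nonneg _)) (by linarith)

theorem fluidDrift_horizontalBarrier_le (hs : 0 ≤ s) (hx1 : b ≤ -x1) (hx2 : 0 ≤ x2) :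
    (horizontalBarrier ha φ s).fluidDrift β x1 x2 ≤ -(s * (b - β)) := by
  rw [fluidDrift_horizontalBarrier, φ.eq_one _ hx1, mul_one]
  gcongr
  linarith

end HorizontalBarrier

section VerticalBarrier

variable {β κ b : ℝ} (hβ : 0 < β) (hκ : β < κ) (φ : Cutoff κ b)

/-- The function `P(x₂) + q(log x₂ + (x₁ + β) / x₂)` with `P'(z) = φ(z) / z`, which controls the
drift for large `x₂`; the profile `q` restores the oblique boundary condition violated by `P`. -/
noncomputable def verticalBarrier : ObliqueFunction where
  val x1 x2 := φ.logPrimitive x2 + fluidLift β κ (φ.crossingProfile hβ hκ) x1 x2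
  d₁ x1 x2 := fluidLift β κ (φ.crossingProfileDeriv hβ hκ) x1 x2 / x2
  d₂ x1 x2 := φ x2 / x2 +
    fluidLift β κ (φ.crossingProfileDeriv hβ hκ) x1 x2 * (1 / x2 - (x1 + β) / x2 ^ 2)
  d₁₁ x1 x2 := fluidLift β κ (φ.crossingProfileDeriv₂ hβ hκ) x1 x2 / x2 / x2
  contDiffOn := ((φ.contDiff_logPrimitive (hβ.trans hκ)).comp contDiff_snd).contDiffOn.add
    (contDiffOn_fluidLift hβ hκ (φ.contDiff_crossingProfile hβ hκ)
      fun _ => φ.crossingProfile_eq_zero hβ hκ)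
  hasDerivWithinAt_fst x1 _ x2 _ :=
    ((hasDerivAt_fluidLift_fst (φ.hasDerivAt_crossingProfile hβ hκ) x1 x2).const_add
      _).hasDerivWithinAt
  hasDerivWithinAt_snd x1 hx1 x2 _ :=
    ((φ.hasDerivAt_logPrimitive (hβ.trans hκ) x2).add
      (hasDerivAt_fluidLift_snd hβ hκ (φ.hasDerivAt_crossingProfile hβ hκ)
        (fun _ => φ.crossingProfile_eq_zero hβ hκ) hx1 x2)).hasDerivWithinAt
  hasDerivWithinAt_fst_fst x1 _ x2 _ :=
    ((hasDerivAt_fluidLift_fst (φ.hasDerivAt_crossingProfileDeriv hβ hκ) x1 x2).div_const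
      x2).hasDerivWithinAt
  oblique x2 _ := by
    rcases le_or_gt x2 κ with h | h
    · rw [fluidLift_of_le h, φ.eq_zero x2 h, zero_div, zero_mul, add_zero]
    · have hx2 : x2 ≠ 0 := ((hβ.trans hκ).trans h).ne'
      rw [fluidLift_of_lt h, φ.crossingProfileDeriv_fluidInvariant hβ hκ h.le]
      field_simp
      ring

variable {x1 x2 : ℝ}

theorem logPrimitive_le_verticalBarrier :
    φ.logPrimitive x2 ≤ (verticalBarrier hβ hκ φ).val x1 x2 :=
  le_add_of_nonneg_right (fluidLift_nonneg (φ.crossingProfile_nonneg hβ hκ))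

theorem verticalBarrier_nonneg : 0 ≤ (verticalBarrier hβ hκ φ).val x1 x2 :=
  (φ.logPrimitive_nonneg (hβ.trans hκ).le x2).trans (logPrimitive_le_verticalBarrier hβ hκ φ)

theorem verticalBarrier_le (hκb : κ ≤ b) (hx1 : x1 ≤ 0) (hx2 : x2 ≤ b) :
    (verticalBarrier hβ hκ φ).val x1 x2 ≤ (b - κ) / β := by
  simp only [verticalBarrier]
  rcases le_or_gt x2 κ with h | h
  · rw [fluidLift_of_le h, φ.logPrimitive_eq_zero h, add_zero]
    exact div_nonneg (sub_nonneg.2 hκb) hβ.le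
  · have hinv : fluidInvariant β x1 x2 ≤ fluidInvariant β 0 x2 :=
      fluidInvariant_mono_fst hx1 ((hβ.trans hκ).trans h).le
    calc φ.logPrimitive x2 + fluidLift β κ (φ.crossingProfile hβ hκ) x1 x2
        ≤ φ.logPrimitive x2 + φ.boundaryPotential β x2 := by
          rw [fluidLift_of_lt h]
          gcongr
          exact φ.crossingProfile_le hβ hκ h.le hinv
      _ = φ.primitive x2 / β := add_sub_cancel _ _
      _ ≤ (b - κ) / β := by
          gcongr
          exact φ.primitive_le hκb hx2

theorem fluidDrift_verticalBarrier : (verticalBarrier hβ hκ φ).fluidDrift β x1 x2 = -φ x2 := by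
  have hcancel : x2 * (φ x2 / x2) = φ x2 :=
    mul_div_cancel_of_imp' fun h => φ.eq_zero x2 (h.trans_le (hβ.trans hκ).le)
  have htransport :=
    fluidLift_transport (β := β) (q := φ.crossingProfileDeriv hβ hκ) (hβ.trans hκ).le x1 x2
  simp only [fluidDrift, verticalBarrier]
  linarith

theorem verticalBarrier_d₁_nonneg (hx2 : 0 ≤ x2) : 0 ≤ (verticalBarrier hβ hκ φ).d₁ x1 x2 :=
  div_nonneg (fluidLift_nonneg (φ.crossingProfileDeriv_nonneg hβ hκ)) hx2

theorem verticalBarrier_d₁_le (hx1 : x1 ≤ 0) : (verticalBarrier hβ hκ φ).d₁ x1 x2 ≤ 1 / β := by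
  simp only [verticalBarrier]
  rcases le_or_gt x2 κ with h | h
  · rw [fluidLift_of_le h, zero_div]
    positivity
  · have hx2 : 0 < x2 := (hβ.trans hκ).trans h
    rw [fluidLift_of_lt h, div_le_iff₀ hx2, one_div_mul_eq_div]
    exact φ.crossingProfileDeriv_le hβ hκ h.le (fluidInvariant_mono_fst hx1 hx2.le)

theorem verticalBarrier_d₁₁_le {M : ℝ} (hM : ∀ x, φ.slope x ≤ M) (hx1 : x1 ≤ 0) :
    (verticalBarrier hβ hκ φ).d₁₁ x1 x2 ≤ (M * κ + 1) / (β * (κ - β)) := by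
  simp only [verticalBarrier]
  rcases le_or_gt x2 κ with h | h
  · have hM0 : 0 ≤ M := (φ.slope_nonneg 0).trans (hM 0)
    have hκ0 : 0 < κ := hβ.trans hκ
    rw [fluidLift_of_le h, zero_div, zero_div]
    positivity
  · have hx2 : 0 < x2 := (hβ.trans hκ).trans h
    rw [fluidLift_of_lt h, div_div, ← sq, div_le_iff₀ (pow_pos hx2 2)]
    exact φ.crossingProfileDeriv₂_le hβ hκ hM h.le (fluidInvariant_mono_fst hx1 hx2.le)

end VerticalBarrier

section LyapunovExponent

variable {β κ1 κ2 : ℝ} (hβ : 0 < β) (hκ : β < κ1) (φ : Cutoff κ1 κ2)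

/-- The logarithm, up to the factor `α`, of the Lyapunov function. The weight `1 / (κ₂ - β)` gives
the horizontal barrier a drift of at most `-1` where `x₁ ≤ -κ₂`. -/
noncomputable def lyapunovExponent : ObliqueFunction :=
  (horizontalBarrier (hβ.trans hκ).le φ (1 / (κ2 - β))).add (verticalBarrier hβ hκ φ)

variable {x1 x2 : ℝ}

theorem lyapunovExponent_nonneg (hκ2 : β < κ2) : 0 ≤ (lyapunovExponent hβ hκ φ).val x1 x2 :=
  add_nonneg (mul_nonneg (one_div_pos.2 (sub_pos.2 hκ2)).le (φ.primitive_nonneg _))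
    (verticalBarrier_nonneg hβ hκ φ)

theorem lyapunovExponent_le (hκ12 : κ1 ≤ κ2) (hx1 : x1 ≤ 0) (hx1' : -x1 ≤ κ2) (hx2 : x2 ≤ κ2) :
    (lyapunovExponent hβ hκ φ).val x1 x2 ≤ 1 / (κ2 - β) * (κ2 - κ1) + (κ2 - κ1) / β :=
  add_le_add
    (mul_le_mul_of_nonneg_left (φ.primitive_le hκ12 hx1')
      (one_div_pos.2 (sub_pos.2 (hκ.trans_le hκ12))).le)
    (verticalBarrier_le hβ hκ φ hκ12 hx1 hx2)

theorem coercive_lyapunovExponent (hκ2 : β < κ2) : (lyapunovExponent hβ hκ φ).Coercive := by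
  have hs : 0 < 1 / (κ2 - β) := one_div_pos.2 (sub_pos.2 hκ2)
  refine coercive_of_tendsto (φ.tendsto_primitive.const_mul_atTop hs)
    (φ.tendsto_logPrimitive (hβ.trans hκ) (hβ.trans hκ2))
    (fun _ _ _ _ => le_add_of_nonneg_right (verticalBarrier_nonneg hβ hκ φ))
    (fun _ _ _ _ => (logPrimitive_le_verticalBarrier hβ hκ φ).trans
      (le_add_of_nonneg_left (mul_nonneg hs.le (φ.primitive_nonneg _))))

theorem fluidDrift_lyapunovExponent_nonpos (hκ2 : β < κ2) (hx2 : 0 ≤ x2) :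
    (lyapunovExponent hβ hκ φ).fluidDrift β x1 x2 ≤ 0 := by
  rw [lyapunovExponent, fluidDrift_add, fluidDrift_verticalBarrier]
  exact add_nonpos (fluidDrift_horizontalBarrier_nonpos _ φ hκ.le
    (one_div_pos.2 (sub_pos.2 hκ2)).le hx2) (neg_nonpos.2 (φ.nonneg x2))

theorem fluidDrift_lyapunovExponent_le_neg_one (hκ2 : β < κ2) (hx2 : 0 ≤ x2)
    (hout : κ2 ≤ -x1 ∨ κ2 ≤ x2) : (lyapunovExponent hβ hκ φ).fluidDrift β x1 x2 ≤ -1 := by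
  have hκβ : 0 < κ2 - β := sub_pos.2 hκ2
  rw [lyapunovExponent, fluidDrift_add, fluidDrift_verticalBarrier]
  rcases hout with h | h
  · have hleft := fluidDrift_horizontalBarrier_le (β := β) (hβ.trans hκ).le φ
      (one_div_pos.2 hκβ).le h hx2
    rw [one_div_mul_cancel hκβ.ne'] at hleft
    linarith [φ.nonneg x2]
  · rw [φ.eq_one x2 h]
    linarith [fluidDrift_horizontalBarrier_nonpos (x1 := x1) (hβ.trans hκ).le φ hκ.le
      (one_div_pos.2 hκβ).le hx2]

theorem fluidDrift_le_neg_one_or_lyapunovExponent_le (hκ12 : κ1 ≤ κ2) (hx1 : x1 ≤ 0)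
    (hx2 : 0 ≤ x2) : (lyapunovExponent hβ hκ φ).fluidDrift β x1 x2 ≤ -1 ∨
      (lyapunovExponent hβ hκ φ).val x1 x2 ≤ 1 / (κ2 - β) * (κ2 - κ1) + (κ2 - κ1) / β := by
  by_cases hout : κ2 ≤ -x1 ∨ κ2 ≤ x2
  · exact .inl (fluidDrift_lyapunovExponent_le_neg_one hβ hκ φ (hκ.trans_le hκ12) hx2 hout)
  · rw [not_or, not_le, not_le] at hout
    exact .inr (lyapunovExponent_le hβ hκ φ hκ12 hx1 hout.1.le hout.2.le)

theorem lyapunovExponent_second_order_le {α M : ℝ} (hκ2 : β < κ2) (hα : 0 ≤ α)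
    (hM : ∀ x, φ.slope x ≤ M) (hx1 : x1 ≤ 0) (hx2 : 0 ≤ x2) :
    (lyapunovExponent hβ hκ φ).d₁₁ x1 x2 + α * (lyapunovExponent hβ hκ φ).d₁ x1 x2 ^ 2 ≤
      1 / (κ2 - β) * M + (M * κ1 + 1) / (β * (κ1 - β)) + α * (1 / (κ2 - β) + 1 / β) ^ 2 := by
  have hs : 0 ≤ 1 / (κ2 - β) := (one_div_pos.2 (sub_pos.2 hκ2)).le
  have hd₁ : |(lyapunovExponent hβ hκ φ).d₁ x1 x2| ≤ 1 / (κ2 - β) + 1 / β :=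
    calc |(lyapunovExponent hβ hκ φ).d₁ x1 x2|
        ≤ |-(1 / (κ2 - β) * φ (-x1))| + |(verticalBarrier hβ hκ φ).d₁ x1 x2| := abs_add_le _ _
      _ ≤ 1 / (κ2 - β) + 1 / β := by
        rw [abs_neg, abs_of_nonneg (mul_nonneg hs (φ.nonneg _)),
          abs_of_nonneg (verticalBarrier_d₁_nonneg hβ hκ φ hx2)]
        exact add_le_add (mul_le_of_le_one_right hs (φ.le_one _))
          (verticalBarrier_d₁_le hβ hκ φ hx1)
  exact add_le_add
    (add_le_add (mul_le_mul_of_nonneg_left (hM (-x1)) hs) (verticalBarrier_d₁₁_le hβ hκ φ hM hx1))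
    (mul_le_mul_of_nonneg_left (sq_le_sq.2 (hd₁.trans (le_abs_self _))) hα)

theorem generator_expMul_lyapunovExponent_le {α M c d : ℝ} (hκ12 : κ1 < κ2) (hα : 0 ≤ α)
    (hM : ∀ x, φ.slope x ≤ M)
    (hc : 1 / (κ2 - β) * M + (M * κ1 + 1) / (β * (κ1 - β)) +
      α * (1 / (κ2 - β) + 1 / β) ^ 2 ≤ 1 - c)
    (hd : Real.exp (α * (1 / (κ2 - β) * (κ2 - κ1) + (κ2 - κ1) / β)) ≤ d)
    (hx1 : x1 ≤ 0) (hx2 : 0 ≤ x2) :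
    ((lyapunovExponent hβ hκ φ).expMul α).generator β x1 x2 ≤
      -(α * c) * ((lyapunovExponent hβ hκ φ).expMul α).val x1 x2 + α * d :=
  have hκ2 : β < κ2 := hκ.trans hκ12
  (generator_expMul_le hα
    ((lyapunovExponent_second_order_le hβ hκ φ hκ2 hα hM hx1 hx2).trans hc)
    (fluidDrift_lyapunovExponent_nonpos hβ hκ φ hκ2 hx2)
    (fluidDrift_le_neg_one_or_lyapunovExponent_le hβ hκ φ hκ12.le hx1 hx2)).trans
    (add_le_add_right (mul_le_mul_of_nonneg_left hd hα) _)

end LyapunovExponent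

end ObliqueFunction

theorem one_div_le_log_div_div_sub {x y : ℝ} (hx : 0 < x) (hxy : x < y) :
    1 / y ≤ Real.log (y / x) / (y - x) := by
  have hy : 0 < y := hx.trans hxy
  rw [le_div_iff₀ (sub_pos.2 hxy)]
  calc 1 / y * (y - x) = 1 - (y / x)⁻¹ := by field_simp
    _ ≤ Real.log (y / x) := Real.one_sub_inv_le_log_of_pos (div_pos hy hx)

theorem exp_mul_log_add {x : ℝ} (hx : 0 < x) (α r : ℝ) :
    Real.exp (α * (Real.log x + r)) = x ^ α * Real.exp (α * r) := by
  rw [Real.rpow_def_of_pos hx, ← Real.exp_add, mul_add, mul_comm α (Real.log x)]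

section Constants

variable {α β κ1 κ2 : ℝ}

theorem weight_le (hκ1 : β < κ1) (hκ12 : κ1 < κ2) :
    1 / (κ2 - β) ≤ Real.log ((κ2 - β) / (κ1 - β)) / (κ2 - κ1) := by
  rw [← sub_sub_sub_cancel_right κ2 κ1 β]
  exact one_div_le_log_div_div_sub (sub_pos.2 hκ1) (sub_lt_sub_right hκ12 β)

theorem exp_box_bound_le (hα : 0 ≤ α) (hβ : 0 < β) (hκ1 : β < κ1) (hκ12 : κ1 < κ2) :
    Real.exp (α * (1 / (κ2 - β) * (κ2 - κ1) + (κ2 - κ1) / β)) ≤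
      ((κ2 - β) / (κ1 - β) * (κ2 / κ1)) ^ α * Real.exp (α * (κ2 - κ1) / β) := by
  have hratio : 0 < (κ2 - β) / (κ1 - β) := div_pos (by linarith) (by linarith)
  have hlast : 1 ≤ κ2 / κ1 := (one_le_div (hβ.trans hκ1)).2 hκ12.le
  have hlog : 1 / (κ2 - β) * (κ2 - κ1) ≤ Real.log ((κ2 - β) / (κ1 - β) * (κ2 / κ1)) :=
    ((le_div_iff₀ (sub_pos.2 hκ12)).1 (weight_le hκ1 hκ12)).trans
      (Real.log_le_log hratio (le_mul_of_one_le_right hratio.le hlast))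
  rw [mul_div_assoc α, ← exp_mul_log_add (mul_pos hratio (one_pos.trans_le hlast))]
  gcongr

theorem second_order_bound_le (hα : 0 ≤ α) (hβ : 0 < β) (hκ1 : β < κ1) (hκ12 : κ1 < κ2) :
    1 / (κ2 - β) * (4 / (κ2 - κ1)) + (4 / (κ2 - κ1) * κ1 + 1) / (β * (κ1 - β)) +
        α * (1 / (κ2 - β) + 1 / β) ^ 2 ≤
      12 / (κ2 - κ1) ^ 2 * Real.log ((κ2 - β) / (κ1 - β)) +
        1 / (β * (κ1 - β)) * (1 + κ1 / (κ1 - β) * (4 * (κ1 - β) / (κ2 - κ1))) +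
        α * (4 / (κ2 - κ1) * Real.log ((κ2 - β) / (κ1 - β)) + 1 / β) ^ 2 := by
  have hδ : 0 < κ2 - κ1 := sub_pos.2 hκ12
  have h1 : κ1 - β ≠ 0 := (sub_pos.2 hκ1).ne'
  have hs : 0 < 1 / (κ2 - β) := one_div_pos.2 (sub_pos.2 (hκ1.trans hκ12))
  have hweight := weight_le hκ1 hκ12
  set ℓ := Real.log ((κ2 - β) / (κ1 - β))
  have hℓ : 0 < ℓ / (κ2 - κ1) := hs.trans_le hweight
  refine add_le_add (add_le_add ?_ (le_of_eq ?_)) ?_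
  · calc 1 / (κ2 - β) * (4 / (κ2 - κ1)) ≤ ℓ / (κ2 - κ1) * (12 / (κ2 - κ1)) := by
          gcongr
          norm_num
      _ = 12 / (κ2 - κ1) ^ 2 * ℓ := by field_simp
  · field_simp
    ring
  · gcongr
    calc 1 / (κ2 - β) ≤ 4 * (ℓ / (κ2 - κ1)) := by linarith
      _ = 4 / (κ2 - κ1) * ℓ := by ring

end Constants

/-- Theorem `ergodic`.  Fix `β > 0`.  For every `α > 0` and
`β < κ₁ < κ₂` there is a function `V : Ω → [1,∞)` of class `C²(Ω)` (one-sided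
derivatives at the boundary), with first-order partial derivatives `V1, V2` and
second-order derivative `V11` in `x₁`, satisfying the oblique derivative condition
`V1(0,x₂) = V2(0,x₂)`, blowing up at infinity, and such that the diffusion generator
satisfies `G_Y V(x) ≤ -α c V(x) + α d` on `Ω` with the explicit constants `c, d`. -/
theorem stmt17 (β : ℝ) (hβ : 0 < β) (α κ1 κ2 : ℝ) (hα : 0 < α)
    (hκ1 : β < κ1) (hκ12 : κ1 < κ2) :
    ∀ c d : ℝ,
      c = 1 - 12 / (κ2 - κ1) ^ 2 * Real.log ((κ2 - β) / (κ1 - β)) -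
            1 / (β * (κ1 - β)) *
              (1 + κ1 / (κ1 - β) * (4 * (κ1 - β) / (κ2 - κ1))) -
            α * (4 / (κ2 - κ1) * Real.log ((κ2 - β) / (κ1 - β)) + 1 / β) ^ 2 →
      d = ((κ2 - β) / (κ1 - β) * (κ2 / κ1)) ^ α *
            Real.exp (α * (κ2 - κ1) / β) →
      ∃ V V1 V2 V11 : ℝ → ℝ → ℝ,
        -- V : Ω → [1, ∞)
        (∀ x1 ≤ (0 : ℝ), ∀ x2 : ℝ, 0 ≤ x2 → 1 ≤ V x1 x2) ∧
        -- V ∈ C²(Ω)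
        ContDiffOn ℝ 2 (fun p : ℝ × ℝ => V p.1 p.2)
          (Set.Iic (0 : ℝ) ×ˢ Set.Ici (0 : ℝ)) ∧
        -- V1, V2, V11 are the (one-sided) partial derivatives of V on Ω
        (∀ x1 ≤ (0 : ℝ), ∀ x2 : ℝ, 0 ≤ x2 →
          HasDerivWithinAt (fun t => V t x2) (V1 x1 x2) (Set.Iic 0) x1 ∧
          HasDerivWithinAt (fun t => V x1 t) (V2 x1 x2) (Set.Ici 0) x2 ∧
          HasDerivWithinAt (fun t => V1 t x2) (V11 x1 x2) (Set.Iic 0) x1) ∧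
        -- oblique boundary condition
        (∀ x2 : ℝ, 0 ≤ x2 → V1 0 x2 = V2 0 x2) ∧
        -- V(x) → ∞ as |x| → ∞ within Ω
        (∀ M : ℝ, ∃ R : ℝ, ∀ x1 ≤ (0 : ℝ), ∀ x2 : ℝ, 0 ≤ x2 →
          R ≤ ‖(x1, x2)‖ → M ≤ V x1 x2) ∧
        -- Foster-Lyapunov drift condition for the diffusion generator G_Y
        (∀ x1 ≤ (0 : ℝ), ∀ x2 : ℝ, 0 ≤ x2 →
          (-x1 + x2 - β) * V1 x1 x2 - x2 * V2 x1 x2 + V11 x1 x2 ≤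
            -(α * c) * V x1 x2 + α * d) := by
  intro c d hc hd
  have hκ2 : β < κ2 := hκ1.trans hκ12
  have hslope (x : ℝ) : (Cutoff.cubic hκ12).slope x ≤ 4 / (κ2 - κ1) :=
    (Cutoff.cubicDensity_le hκ12 x).trans
      (div_le_div_of_nonneg_right (by norm_num) (sub_pos.2 hκ12).le)
  let F := ObliqueFunction.lyapunovExponent hβ hκ1 (Cutoff.cubic hκ12)
  have hF (x1 x2 : ℝ) : 0 ≤ F.val x1 x2 := ObliqueFunction.lyapunovExponent_nonneg hβ hκ1 _ hκ2
  let V := F.expMul α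
  have hV : V.Coercive := (ObliqueFunction.coercive_lyapunovExponent hβ hκ1 _ hκ2).expMul hα
  exact ⟨V.val, V.d₁, V.d₂, V.d₁₁,
    fun x1 _ x2 _ => Real.one_le_exp (mul_nonneg hα.le (hF x1 x2)), V.contDiffOn,
    fun x1 hx1 x2 hx2 => ⟨V.hasDerivWithinAt_fst x1 hx1 x2 hx2,
      V.hasDerivWithinAt_snd x1 hx1 x2 hx2, V.hasDerivWithinAt_fst_fst x1 hx1 x2 hx2⟩,
    V.oblique, hV,
    fun x1 hx1 x2 hx2 => ObliqueFunction.generator_expMul_lyapunovExponent_le hβ hκ1 _ hκ12 hα.le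
      hslope ((second_order_bound_le hα.le hβ hκ1 hκ12).trans_eq (by rw [hc]; ring))
      ((exp_box_bound_le hα.le hβ hκ1 hκ12).trans_eq hd.symm) hx1 hx2⟩
end

section
/- Fix κ_1 and κ_2 with β < κ_1 < κ_2. For every x with x_1 ≤ −κ_2/√n and x_2 > 0, the hitting times satisfy 0 < τ̃^(κ_1)(x) − τ̃^(κ_2)(x) ≤ log((κ_2 − β)/(κ_1 − β)). -/
/-- `η` solves the equation `-β/√n + (x₁ + β/√n)e^{-η} + x₂ η e^{-η} = -κ/√n`
defining the hitting time `τ̃^{(κ)}` of the set `{x₁ = -κ/√n}`. -/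
def TautEq (n : ℕ) (β κ x1 x2 η : ℝ) : Prop :=
  -(β / Real.sqrt n) + (x1 + β / Real.sqrt n) * Real.exp (-η) +
      x2 * η * Real.exp (-η) = -(κ / Real.sqrt n)

/-!
Multiplied by `√n e^η`, the equation for `τ̃^{(κ)}(x)` says that the curve `(κ - β) e^η` meets a
nonincreasing line that does not depend on `κ`. Raising `κ` raises the curve, so the intersection
moves left; the line is no lower there, hence `(κ₁ - β) e^{η₁} ≤ (κ₂ - β) e^{η₂}`, which is
the logarithmic bound.
-/

theorem lt_of_monotone_le_antitone_of_antitone_lt_monotone {α γ : Type*} [LinearOrder α]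
    [Preorder γ] {u f : α → γ} (hu : Monotone u) (hf : Antitone f) {a b : α} (ha : u a ≤ f a)
    (hb : f b < u b) : a < b := by
  by_contra! hba
  exact (hb.trans_le (hu hba)).not_ge (ha.trans (hf hba))

theorem mul_exp_le_mul_exp_iff_sub_le_log {c₁ c₂ : ℝ} (hc₁ : 0 < c₁) (hc₂ : 0 < c₂) (a b : ℝ) :
    c₁ * Real.exp a ≤ c₂ * Real.exp b ↔ a - b ≤ Real.log (c₂ / c₁) := by
  rw [Real.le_log_iff_exp_le (div_pos hc₂ hc₁), Real.exp_sub,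
    div_le_div_iff₀ (Real.exp_pos b) hc₁, mul_comm c₁]

theorem tautEq_iff_mul_exp_eq {n : ℕ} (hn : 1 ≤ n) (β κ x1 x2 η : ℝ) :
    TautEq n β κ x1 x2 η ↔
      (κ - β) * Real.exp η = -(Real.sqrt n * x1 + β) - Real.sqrt n * x2 * η := by
  have hs : Real.sqrt n ≠ 0 := Real.sqrt_ne_zero'.mpr (by exact_mod_cast hn)
  rw [TautEq, Real.exp_neg]
  field_simp
  constructor <;> intro h <;> linarith

theorem stmt19_general {n : ℕ} (hn : 1 ≤ n) {β κ1 κ2 : ℝ} (hκ1 : β < κ1) (hκ12 : κ1 < κ2)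
    {x1 x2 η1 η2 : ℝ} (hx2 : 0 ≤ x2) (h1 : TautEq n β κ1 x1 x2 η1)
    (h2 : TautEq n β κ2 x1 x2 η2) :
    0 < η1 - η2 ∧ η1 - η2 ≤ Real.log ((κ2 - β) / (κ1 - β)) := by
  rw [tautEq_iff_mul_exp_eq hn] at h1 h2
  have hc₁ : 0 < κ1 - β := sub_pos.mpr hκ1
  have hc : κ1 - β < κ2 - β := sub_lt_sub_right hκ12 β
  have hc₂ : 0 < κ2 - β := hc₁.trans hc
  let line (η : ℝ) : ℝ := -(Real.sqrt n * x1 + β) - Real.sqrt n * x2 * η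
  have hline : Antitone line := fun a b hab ↦ by
    dsimp only [line]
    gcongr
  have hcurve : Monotone fun η ↦ (κ2 - β) * Real.exp η :=
    Real.exp_monotone.const_mul hc₂.le
  have hline_lt : line η1 < (κ2 - β) * Real.exp η1 := calc
    line η1 = (κ1 - β) * Real.exp η1 := h1.symm
    _ < (κ2 - β) * Real.exp η1 := by gcongr
  have hlt : η2 < η1 :=
    lt_of_monotone_le_antitone_of_antitone_lt_monotone hcurve hline h2.le hline_lt
  refine ⟨sub_pos.mpr hlt, (mul_exp_le_mul_exp_iff_sub_le_log hc₁ hc₂ η1 η2).mp ?_⟩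
  calc
    (κ1 - β) * Real.exp η1 = line η1 := h1
    _ ≤ line η2 := hline hlt.le
    _ = (κ2 - β) * Real.exp η2 := h2.symm

/-- Fix `β < κ₁ < κ₂` and let `τ̃^{(κ₁)} = taut1`, `τ̃^{(κ₂)} = taut2` be
the hitting times (hypotheses `htaut1`, `htaut2`).  For every `x` with `x₁ ≤ -κ₂/√n`
and `x₂ > 0`, `0 < τ̃^{(κ₁)}(x) - τ̃^{(κ₂)}(x) ≤ log((κ₂ - β)/(κ₁ - β))`. -/
theorem stmt19 (n : ℕ) (hn : 1 ≤ n) (β κ1 κ2 : ℝ) (hβ : 0 < β)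
    (hκ1 : β < κ1) (hκ12 : κ1 < κ2)
    (taut1 taut2 : ℝ → ℝ → ℝ)
    (htaut1 : ∀ x1 ≤ -(κ1 / Real.sqrt n), ∀ x2 : ℝ, 0 ≤ x2 →
      0 ≤ taut1 x1 x2 ∧ TautEq n β κ1 x1 x2 (taut1 x1 x2))
    (htaut2 : ∀ x1 ≤ -(κ2 / Real.sqrt n), ∀ x2 : ℝ, 0 ≤ x2 →
      0 ≤ taut2 x1 x2 ∧ TautEq n β κ2 x1 x2 (taut2 x1 x2)) :
    ∀ x1 ≤ -(κ2 / Real.sqrt n), ∀ x2 : ℝ, 0 < x2 →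
      0 < taut1 x1 x2 - taut2 x1 x2 ∧
      taut1 x1 x2 - taut2 x1 x2 ≤ Real.log ((κ2 - β) / (κ1 - β)) := by
  intro x1 hx1 x2 hx2
  have hx1' : x1 ≤ -(κ1 / Real.sqrt n) := hx1.trans (by gcongr)
  exact stmt19_general hn hκ1 hκ12 hx2.le (htaut1 x1 hx1' x2 hx2.le).2 (htaut2 x1 hx1 x2 hx2.le).2
end
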